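/- Let N ≥ 2, α ∈ (0,N), s > 0, and ε ∈ (0, s). Suppose u : ℝ^N → ℝ is measurable with |u|^s ∈ L^1(ℝ^N), u ∈ L^∞(ℝ^N), lim_{|x|→∞} ess sup_{|y|≥|x|/2} |u(y)| = 0, and sup_{x∈ℝ^N} (I_α ∗ |u|^{s−ε})(x) < ∞. Then lim_{|x|→∞} (I_α ∗ |u|^s)(x) = 0. -/

import Mathlib

/-!
Split the integral at a fixed large ball `S`, not at `B_{|x|/2}`. On `S` the kernel `I_α(x - ·)`
tends to zero uniformly as `|x| → ∞`, while `|u|^s` is integrable there. Off `S` we have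
`|u|^ε ≤ δ`, hence `|u|^s ≤ δ |u|^{s-ε}`, and that part of the potential is at most
`δ sup (I_α ∗ |u|^{s-ε})`.
-/

open MeasureTheory Real Filter Topology Set
open scoped RealInnerProductSpace ENNReal

noncomputable section

/-- Euclidean space `ℝ^N`. -/
abbrev Euc (N : ℕ) : Type := EuclideanSpace ℝ (Fin N)

/-- The normalisation constant `A_α` of the Riesz potential. -/
def rieszConst (N : ℕ) (α : ℝ) : ℝ :=
  Real.Gamma (((N : ℝ) - α) / 2) /
    (2 ^ α * Real.pi ^ ((N : ℝ) / 2) * Real.Gamma (α / 2))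

/-- The Riesz kernel `I_α(x) = A_α |x|^(α - N)`. -/
def rieszKernel (N : ℕ) (α : ℝ) (x : Euc N) : ℝ :=
  rieszConst N α * ‖x‖ ^ (α - (N : ℝ))

/-- The Riesz potential `(I_α ∗ v)(x)`. -/
def rieszPot (N : ℕ) (α : ℝ) (v : Euc N → ℝ) (x : Euc N) : ℝ :=
  ∫ y, rieszKernel N α (x - y) * v y

/-- Membership in the Sobolev space `H¹(ℝ^N)`: the function and its gradient are
square integrable. -/
def MemH1 (N : ℕ) (u : Euc N → ℝ) : Prop :=
  MemLp u 2 (volume : Measure (Euc N)) ∧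
    MemLp (fun x => gradient u x) 2 (volume : Measure (Euc N))

/-- The `H¹` inner product. -/
def H1inner (N : ℕ) (u v : Euc N → ℝ) : ℝ :=
  ∫ x, (⟪gradient u x, gradient v x⟫ + u x * v x)

/-- The `H¹` norm. -/
def H1norm (N : ℕ) (u : Euc N → ℝ) : ℝ :=
  Real.sqrt (H1inner N u u)

/-- The nonlocal term `Q(u) = ∫ (I_α ∗ F(u)) F(u)`. -/
def Qterm (N : ℕ) (α : ℝ) (F : ℝ → ℝ) (u : Euc N → ℝ) : ℝ :=
  ∫ x, rieszPot N α (fun y => F (u y)) x * F (u x)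

/-- The energy functional of the Choquard equation. -/
def energy (N : ℕ) (α : ℝ) (F : ℝ → ℝ) (u : Euc N → ℝ) : ℝ :=
  (1 / 2) * (∫ x, (‖gradient u x‖ ^ 2 + u x ^ 2)) - (1 / 2) * Qterm N α F u

/-- The Pohozaev functional. -/
def pohozaev (N : ℕ) (α : ℝ) (F : ℝ → ℝ) (u : Euc N → ℝ) : ℝ :=
  (((N : ℝ) - 2) / 2) * (∫ x, ‖gradient u x‖ ^ 2)
    + ((N : ℝ) / 2) * (∫ x, u x ^ 2)
    - (((N : ℝ) + α) / 2) * Qterm N α F u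

/-- The action of the derivative `E'(u)` on a test function `φ`. -/
def energyDeriv (N : ℕ) (α : ℝ) (F : ℝ → ℝ) (u φ : Euc N → ℝ) : ℝ :=
  (∫ x, (⟪gradient u x, gradient φ x⟫ + u x * φ x))
    - ∫ x, rieszPot N α (fun y => F (u y)) x * deriv F (u x) * φ x

/-- `u` is a weak solution of the Choquard equation `-Δu + u = (I_α ∗ F(u)) f(u)`,
with `f = F'`. -/
def IsWeakSolution (N : ℕ) (α : ℝ) (F : ℝ → ℝ) (u : Euc N → ℝ) : Prop :=
  ∀ φ : Euc N → ℝ, ContDiff ℝ (⊤ : ℕ∞) φ → HasCompactSupport φ →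
    energyDeriv N α F u φ = 0

/-- `u` is nontrivial: not almost everywhere zero. -/
def Nontriv (N : ℕ) (u : Euc N → ℝ) : Prop :=
  ¬ u =ᵐ[(volume : Measure (Euc N))] (fun _ => 0)

/-- Assumption (F0): `F(s₀) ≠ 0` for some `s₀`. -/
def CondF0 (F : ℝ → ℝ) : Prop := ∃ s₀ : ℝ, F s₀ ≠ 0

/-- Assumption (F1): `lim_{s → 0} f(s)/s = μ ∈ [0, ∞)`, `f = F'`. -/
def CondF1 (F : ℝ → ℝ) : Prop :=
  ∃ μ : ℝ, 0 ≤ μ ∧ Tendsto (fun s => deriv F s / s) (𝓝[≠] (0 : ℝ)) (𝓝 μ)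

/-- Assumption (F2): subcritical growth of `F` at infinity. -/
def CondF2 (N : ℕ) (α : ℝ) (F : ℝ → ℝ) : Prop :=
  (3 ≤ N →
    Tendsto (fun s => F s / |s| ^ (((N : ℝ) + α) / ((N : ℝ) - 2)))
      (cocompact ℝ) (𝓝 0)) ∧
  (N = 2 → ∃ p : ℝ, 2 ≤ p ∧
    Tendsto (fun s => F s / |s| ^ p) (cocompact ℝ) (𝓝 0))

/-- Assumption (F1′): `lim_{s → 0⁺} f(s)/s^{r-1} = μ ∈ [0, ∞)` for some `r > 2`, and
`s ↦ f(s)/|s|` is increasing on `ℝ ∖ {0}`. -/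
def CondF1' (F : ℝ → ℝ) : Prop :=
  (∃ r : ℝ, 2 < r ∧ ∃ μ : ℝ, 0 ≤ μ ∧
    Tendsto (fun s => deriv F s / s ^ (r - 1)) (𝓝[>] (0 : ℝ)) (𝓝 μ)) ∧
  StrictMonoOn (fun s => deriv F s / |s|) {s : ℝ | s ≠ 0}

/-- Assumption (F2′): `lim_{|s| → ∞} F(s)/|s|^p = 0` for some `p ∈ (2, (N+α)/(N-2))`
(`(N+α)/(N-2) = ∞` when `N = 2`). -/
def CondF2' (N : ℕ) (α : ℝ) (F : ℝ → ℝ) : Prop :=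
  ∃ p : ℝ, 2 < p ∧ (3 ≤ N → p < ((N : ℝ) + α) / ((N : ℝ) - 2)) ∧
    Tendsto (fun s => F s / |s| ^ p) (cocompact ℝ) (𝓝 0)

/-- A finite Coxeter group of rank `k` acting on `ℝ^N = ℝ^k × ℝ^{N-k}` by reflections,
together with the sign character `ψ` (the unique epimorphism onto `{±1}` sending each
Coxeter generator to `-1`) and the strict fundamental domain property of the closed
chamber `{x | ∀ s ∈ S, ⟪x, vec s⟫ ≥ 0}`. -/
structure CoxeterAction (N k : ℕ) where
  G : Subgroup (Euc N ≃ₗᵢ[ℝ] Euc N)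
  S : Finset (Euc N ≃ₗᵢ[ℝ] Euc N)
  finiteG : (G : Set (Euc N ≃ₗᵢ[ℝ] Euc N)).Finite
  rank_eq : S.card = k
  S_subset : (S : Set (Euc N ≃ₗᵢ[ℝ] Euc N)) ⊆ (G : Set (Euc N ≃ₗᵢ[ℝ] Euc N))
  gen : Subgroup.closure (S : Set (Euc N ≃ₗᵢ[ℝ] Euc N)) = G
  vec : (Euc N ≃ₗᵢ[ℝ] Euc N) → Euc N
  vec_norm : ∀ s ∈ S, ‖vec s‖ = 1
  vec_coord : ∀ s ∈ S, ∀ i : Fin N, k ≤ (i : ℕ) → vec s i = 0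
  refl_eq : ∀ s ∈ S, ∀ x : Euc N, s x = x - (2 * ⟪x, vec s⟫) • vec s
  ψ : (Euc N ≃ₗᵢ[ℝ] Euc N) → ℝ
  ψ_mul : ∀ g ∈ G, ∀ h ∈ G, ψ (g * h) = ψ g * ψ h
  ψ_gen : ∀ s ∈ S, ψ s = -1
  ψ_pm : ∀ g ∈ G, ψ g = 1 ∨ ψ g = -1
  isFund : ∀ x : Euc N, ∃! y : Euc N,
    (∀ s ∈ S, 0 ≤ ⟪y, vec s⟫) ∧ ∃ g ∈ G, g x = y

/-- The symmetric subspace `H_G ⊆ H¹(ℝ^N)` of `G`-equivariant functions. -/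
def MemHG {N k : ℕ} (C : CoxeterAction N k) (u : Euc N → ℝ) : Prop :=
  MemH1 N u ∧ ∀ g ∈ C.G, ∀ x : Euc N, u (g⁻¹ x) = C.ψ g * u x

/-- `H_G` as a set of functions. -/
def HGset {N k : ℕ} (C : CoxeterAction N k) : Set (Euc N → ℝ) := {u | MemHG C u}

/-- `H¹(ℝ^N)` as a set of functions. -/
def H1set (N : ℕ) : Set (Euc N → ℝ) := {u | MemH1 N u}

/-- Continuity of a path of functions with respect to the `H¹` distance, on a set
of parameters. -/
def H1ContOn (N : ℕ) (γ : ℝ → Euc N → ℝ) (A : Set ℝ) : Prop :=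
  ∀ t ∈ A, ∀ ε > 0, ∃ δ > 0, ∀ t' ∈ A, |t' - t| < δ →
    H1norm N (fun x => γ t' x - γ t x) < ε

/-- The mountain pass level of the Choquard energy over a class `X` of functions:
the infimum, over `H¹`-continuous paths in `X` joining `0` to a function of negative
energy, of the maximum of the energy along the path. -/
def mpLevel (N : ℕ) (α : ℝ) (F : ℝ → ℝ) (X : Set (Euc N → ℝ)) : ℝ :=
  sInf { c : ℝ | ∃ γ : ℝ → Euc N → ℝ,
    (∀ t ∈ Icc (0 : ℝ) 1, γ t ∈ X) ∧
    H1ContOn N γ (Icc 0 1) ∧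
    γ 0 = (fun _ => 0) ∧
    energy N α F (γ 1) < 0 ∧
    c = sSup ((fun t => energy N α F (γ t)) '' Icc (0 : ℝ) 1) }

/-- The mountain pass level `c_G` over the symmetric subspace `H_G`. -/
def cG {N k : ℕ} (α : ℝ) (F : ℝ → ℝ) (C : CoxeterAction N k) : ℝ :=
  mpLevel N α F (HGset C)

/-- The strict fundamental domain (closed chamber) of the Coxeter group. -/
def fund {N k : ℕ} (C : CoxeterAction N k) : Set (Euc N) :=
  {x | ∀ s ∈ C.S, 0 ≤ ⟪x, C.vec s⟫}

/-- The facet `∂^i 𝓕`: points of the chamber lying on exactly `i` walls. -/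
def facet {N k : ℕ} (C : CoxeterAction N k) (i : ℕ) : Set (Euc N) :=
  {q | q ∈ fund C ∧
    {s | s ∈ C.S ∧ ⟪q, C.vec s⟫ = 0}.ncard = i}

/-- The symmetric class associated with the isotropy subgroup `S_q = {g ∈ G : g q = q}`. -/
def stabSet {N k : ℕ} (C : CoxeterAction N k) (q : Euc N) : Set (Euc N → ℝ) :=
  {u | MemH1 N u ∧ ∀ g ∈ C.G, g q = q → ∀ x : Euc N, u (g⁻¹ x) = C.ψ g * u x}

/-- The mountain pass level `c_{S_q}` associated with the isotropy subgroup of `q`. -/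
def cStab {N k : ℕ} (α : ℝ) (F : ℝ → ℝ) (C : CoxeterAction N k) (q : Euc N) : ℝ :=
  mpLevel N α F (stabSet C q)

/-- The cardinality `|Gq|` of the orbit of `q` under `G`. -/
def orbCard {N k : ℕ} (C : CoxeterAction N k) (q : Euc N) : ℕ :=
  ((fun g : Euc N ≃ₗᵢ[ℝ] Euc N => g q) '' (C.G : Set (Euc N ≃ₗᵢ[ℝ] Euc N))).ncard

open scoped NNReal

theorem eventually_cocompact_forall_neg_add {G : Type*} [AddGroup G] [TopologicalSpace G]
    [ContinuousAdd G] {p : G → Prop} {S : Set G} (hp : ∀ᶠ z in cocompact G, p z)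
    (hS : IsCompact S) :
    ∀ᶠ x in cocompact G, ∀ y ∈ S, p (-y + x) := by
  obtain ⟨C, hC, hCp⟩ := mem_cocompact.mp hp
  filter_upwards [(hS.add hC).compl_mem_cocompact] with x hx y hy
  exact hCp fun hyx ↦ hx ⟨y, hy, -y + x, hyx, add_neg_cancel_left y x⟩

section LConvolution

variable {G : Type*} [MeasurableSpace G] {μ : Measure G} {K v w : G → ℝ≥0∞}

theorem lconvolution_mono_measure [Add G] [Neg G] {ν : Measure G} (h : μ ≤ ν) (x : G) :
    (w ⋆ₗ[μ] K) x ≤ (w ⋆ₗ[ν] K) x :=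
  lintegral_mono' h le_rfl

theorem lconvolution_le_mul_of_ae_le_mul [Add G] [Neg G] {c : ℝ≥0∞} (hc : c ≠ ∞)
    (h : ∀ᵐ y ∂μ, w y ≤ c * v y) (x : G) : (w ⋆ₗ[μ] K) x ≤ c * (v ⋆ₗ[μ] K) x :=
  calc (w ⋆ₗ[μ] K) x ≤ ∫⁻ y, c * (v y * K (-y + x)) ∂μ := by
        refine lintegral_mono_ae (h.mono fun y hy ↦ ?_)
        rw [← mul_assoc]
        gcongr
    _ = c * (v ⋆ₗ[μ] K) x := lintegral_const_mul' _ _ hc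

theorem lconvolution_restrict_add_compl [Add G] [Neg G] {S : Set G} (hS : MeasurableSet S)
    (x : G) :
    (w ⋆ₗ[μ.restrict S] K) x + (w ⋆ₗ[μ.restrict Sᶜ] K) x = (w ⋆ₗ[μ] K) x :=
  lintegral_add_compl _ hS

variable [AddGroup G] [TopologicalSpace G] [ContinuousAdd G] [T2Space G]
  [OpensMeasurableSpace G]

theorem tendsto_lconvolution_restrict_cocompact {S : Set G} (hK : Tendsto K (cocompact G) (𝓝 0))
    (hS : IsCompact S) (hw : ∫⁻ y in S, w y ∂μ ≠ ∞) :
    Tendsto (w ⋆ₗ[μ.restrict S] K) (cocompact G) (𝓝 0) := by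
  refine ENNReal.tendsto_nhds_zero.mpr fun η hη ↦ ?_
  obtain ⟨c, hc, hcη⟩ := ENNReal.exists_nnreal_pos_mul_lt hw hη.ne'
  have hKc : ∀ᶠ z in cocompact G, K z ≤ c :=
    ENNReal.tendsto_nhds_zero.mp hK c (ENNReal.coe_pos.mpr hc)
  filter_upwards [eventually_cocompact_forall_neg_add hKc hS] with x hx
  calc (w ⋆ₗ[μ.restrict S] K) x ≤ ∫⁻ y in S, c * w y ∂μ := by
        refine setLIntegral_mono' hS.measurableSet fun y hy ↦ ?_
        rw [mul_comm]
        gcongr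
        exact hx y hy
    _ = c * ∫⁻ y in S, w y ∂μ := lintegral_const_mul' _ _ ENNReal.coe_ne_top
    _ ≤ η := hcη.le

theorem tendsto_lconvolution_cocompact_of_ae_le_mul {M : ℝ≥0∞}
    (hK : Tendsto K (cocompact G) (𝓝 0)) (hw : ∀ S, IsCompact S → ∫⁻ y in S, w y ∂μ ≠ ∞)
    (hwv : ∀ δ : ℝ≥0, 0 < δ → ∃ S, IsCompact S ∧ ∀ᵐ y ∂μ.restrict Sᶜ, w y ≤ δ * v y)
    (hM : M ≠ ∞) (hv : ∀ᶠ x in cocompact G, (v ⋆ₗ[μ] K) x ≤ M) :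
    Tendsto (w ⋆ₗ[μ] K) (cocompact G) (𝓝 0) := by
  refine ENNReal.tendsto_nhds_zero.mpr fun η hη ↦ ?_
  have hη2 : 0 < η / 2 := ENNReal.half_pos hη.ne'
  obtain ⟨δ, hδ, hδM⟩ := ENNReal.exists_nnreal_pos_mul_lt hM hη2.ne'
  obtain ⟨S, hS, hSwv⟩ := hwv δ hδ
  have hnear : ∀ᶠ x in cocompact G, (w ⋆ₗ[μ.restrict S] K) x ≤ η / 2 :=
    ENNReal.tendsto_nhds_zero.mp (tendsto_lconvolution_restrict_cocompact hK hS (hw S hS)) _ hη2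
  filter_upwards [hnear, hv] with x hx hvx
  have hfar : (w ⋆ₗ[μ.restrict Sᶜ] K) x ≤ η / 2 :=
    calc (w ⋆ₗ[μ.restrict Sᶜ] K) x ≤ δ * (v ⋆ₗ[μ.restrict Sᶜ] K) x :=
          lconvolution_le_mul_of_ae_le_mul ENNReal.coe_ne_top hSwv x
      _ ≤ δ * (v ⋆ₗ[μ] K) x := by
          gcongr
          exact lconvolution_mono_measure Measure.restrict_le_self x
      _ ≤ δ * M := by gcongr
      _ ≤ η / 2 := hδM.le
  calc (w ⋆ₗ[μ] K) x = (w ⋆ₗ[μ.restrict S] K) x + (w ⋆ₗ[μ.restrict Sᶜ] K) x :=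
        (lconvolution_restrict_add_compl hS.measurableSet x).symm
    _ ≤ η / 2 + η / 2 := add_le_add hx hfar
    _ = η := ENNReal.add_halves η

end LConvolution

theorem rpow_le_mul_rpow_sub {a δ s ε : ℝ} (ha : 0 ≤ a) (hδ : 0 ≤ δ) (hε : 0 < ε) (hεs : ε ≤ s)
    (h : a ≤ δ ^ ε⁻¹) : a ^ s ≤ δ * a ^ (s - ε) :=
  calc a ^ s = a ^ ε * a ^ (s - ε) := by
        rw [← rpow_add_of_nonneg ha hε.le (sub_nonneg.mpr hεs), add_sub_cancel]
    _ ≤ δ * a ^ (s - ε) := by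
        gcongr
        exact (le_rpow_inv_iff_of_pos ha hδ hε).mp h

theorem exists_isCompact_ae_enorm_rpow_le_mul {E F : Type*} [SeminormedAddGroup E] [ProperSpace E]
    [MeasurableSpace E] [OpensMeasurableSpace E] {μ : Measure E} [SeminormedAddGroup F]
    {u : E → F} {s ε : ℝ} (hε : 0 < ε) (hεs : ε ≤ s)
    (hdecay : ∀ δ : ℝ, 0 < δ → ∃ R : ℝ, ∀ᵐ y ∂μ, R ≤ ‖y‖ → ‖u y‖ ≤ δ)
    {δ : ℝ≥0} (hδ : 0 < δ) :
    ∃ S, IsCompact S ∧ ∀ᵐ y ∂μ.restrict Sᶜ, ‖‖u y‖ ^ s‖ₑ ≤ δ * ‖‖u y‖ ^ (s - ε)‖ₑ := by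
  obtain ⟨R, hR⟩ := hdecay ((δ : ℝ) ^ ε⁻¹) (by positivity)
  refine ⟨Metric.closedBall 0 R, isCompact_closedBall 0 R, ?_⟩
  rw [ae_restrict_iff' Metric.isClosed_closedBall.measurableSet.compl]
  filter_upwards [hR] with y hy hyR
  rw [mem_compl_iff, mem_closedBall_zero_iff, not_le] at hyR
  rw [Real.enorm_of_nonneg (by positivity), Real.enorm_of_nonneg (by positivity),
    ← ENNReal.ofReal_coe_nnreal, ← ENNReal.ofReal_mul δ.coe_nonneg]
  exact ENNReal.ofReal_le_ofReal
    (rpow_le_mul_rpow_sub (norm_nonneg _) δ.coe_nonneg hε hεs (hy hyR.le))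

section RieszPotential

variable {N : ℕ} {α : ℝ}

theorem rieszConst_pos (hα0 : 0 < α) (hαN : α < N) : 0 < rieszConst N α := by
  have hnum : 0 < Real.Gamma ((N - α) / 2) := Gamma_pos_of_pos (by linarith)
  have hden : 0 < Real.Gamma (α / 2) := Gamma_pos_of_pos (by linarith)
  exact div_pos hnum (mul_pos (by positivity) hden)

theorem rieszKernel_nonneg (hα0 : 0 < α) (hαN : α < N) (z : Euc N) : 0 ≤ rieszKernel N α z :=
  mul_nonneg (rieszConst_pos hα0 hαN).le (by positivity)

theorem tendsto_rieszKernel_cocompact (hαN : α < N) :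
    Tendsto (rieszKernel N α) (cocompact (Euc N)) (𝓝 0) := by
  have hpow : Tendsto (fun z : Euc N ↦ ‖z‖ ^ (α - N)) (cocompact (Euc N)) (𝓝 0) := by
    simpa only [neg_sub, Function.comp_def] using
      (tendsto_rpow_neg_atTop (sub_pos.mpr hαN)).comp (tendsto_norm_cocompact_atTop (E := Euc N))
  simpa only [mul_zero] using! hpow.const_mul (rieszConst N α)

theorem lintegral_enorm_rieszKernel_mul (v : Euc N → ℝ) (x : Euc N) :
    ∫⁻ y, ‖rieszKernel N α (x - y) * v y‖ₑ = ((‖v ·‖ₑ) ⋆ₗ (‖rieszKernel N α ·‖ₑ)) x := by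
  simp only [lconvolution_def, enorm_mul, mul_comm, neg_add_eq_sub]

theorem enorm_rieszPot_le (v : Euc N → ℝ) (x : Euc N) :
    ‖rieszPot N α v x‖ₑ ≤ ((‖v ·‖ₑ) ⋆ₗ (‖rieszKernel N α ·‖ₑ)) x :=
  (enorm_integral_le_lintegral_enorm _).trans_eq (lintegral_enorm_rieszKernel_mul v x)

theorem lintegral_ofReal_rieszKernel_mul (hα0 : 0 < α) (hαN : α < N) {v : Euc N → ℝ}
    (hv : ∀ y, 0 ≤ v y) (x : Euc N) :
    ∫⁻ y, ENNReal.ofReal (rieszKernel N α (x - y) * v y) =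
      ((‖v ·‖ₑ) ⋆ₗ (‖rieszKernel N α ·‖ₑ)) x := by
  rw [← lintegral_enorm_rieszKernel_mul]
  refine lintegral_congr fun y ↦ (Real.enorm_of_nonneg ?_).symm
  exact mul_nonneg (rieszKernel_nonneg hα0 hαN _) (hv y)

end RieszPotential

theorem riesz_potential_decay_general {E : Type*} [SeminormedAddGroup E] (N : ℕ) (α s ε : ℝ)
    (hα0 : 0 < α) (hαN : α < (N : ℝ)) (hε0 : 0 < ε) (hεs : ε < s) (u : Euc N → E)
    (hint : LocallyIntegrable (fun y ↦ ‖u y‖ ^ s) (volume : Measure (Euc N)))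
    (hdecay : ∀ δ : ℝ, 0 < δ → ∃ R : ℝ,
      ∀ᵐ y : Euc N ∂(volume : Measure (Euc N)), R ≤ ‖y‖ → ‖u y‖ ≤ δ)
    (hpot : ∃ M : ℝ, ∀ᶠ x in cocompact (Euc N),
      ∫⁻ y, ENNReal.ofReal (rieszKernel N α (x - y) * ‖u y‖ ^ (s - ε)) ≤ ENNReal.ofReal M) :
    Tendsto (fun x : Euc N ↦ rieszPot N α (fun y ↦ ‖u y‖ ^ s) x) (cocompact (Euc N)) (𝓝 0) := by
  obtain ⟨M, hM⟩ := hpot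
  have hK : Tendsto (‖rieszKernel N α ·‖ₑ) (cocompact (Euc N)) (𝓝 0) :=
    tendsto_zero_iff_enorm_tendsto_zero.mp (tendsto_rieszKernel_cocompact hαN)
  have hbound : ∀ᶠ x in cocompact (Euc N),
      ((‖‖u ·‖ ^ (s - ε)‖ₑ) ⋆ₗ (‖rieszKernel N α ·‖ₑ)) x ≤ ENNReal.ofReal M := by
    simpa only [lintegral_ofReal_rieszKernel_mul hα0 hαN
      (fun y ↦ rpow_nonneg (norm_nonneg (u y)) (s - ε))] using hM
  have hconv : Tendsto ((‖‖u ·‖ ^ s‖ₑ) ⋆ₗ (‖rieszKernel N α ·‖ₑ)) (cocompact (Euc N)) (𝓝 0) :=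
    tendsto_lconvolution_cocompact_of_ae_le_mul hK
      (fun S hS ↦ (hint.integrableOn_isCompact hS).hasFiniteIntegral.ne)
      (fun _ ↦ exists_isCompact_ae_enorm_rpow_le_mul hε0 hεs.le hdecay)
      ENNReal.ofReal_ne_top hbound
  exact tendsto_zero_iff_enorm_tendsto_zero.mpr <|
    tendsto_of_tendsto_of_tendsto_of_le_of_le tendsto_const_nhds hconv (fun _ ↦ zero_le)
      (enorm_rieszPot_le _)

/-- Decay of the Riesz potential: if `|u|^s ∈ L¹`, `u ∈ L^∞`,
`u` decays essentially at infinity, and `I_α ∗ |u|^{s-ε}` is uniformly bounded, then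
`(I_α ∗ |u|^s)(x) → 0` as `|x| → ∞`. -/
theorem riesz_potential_decay (N : ℕ) (α s ε : ℝ)
    (hN : 2 ≤ N) (hα0 : 0 < α) (hαN : α < (N : ℝ))
    (hs : 0 < s) (hε0 : 0 < ε) (hεs : ε < s)
    (u : Euc N → ℝ) (hmeas : Measurable u)
    (hint : Integrable (fun y => |u y| ^ s) (volume : Measure (Euc N)))
    (hbdd : ∃ M : ℝ, ∀ᵐ x : Euc N ∂(volume : Measure (Euc N)), |u x| ≤ M)
    (hdecay : ∀ δ : ℝ, 0 < δ → ∃ R : ℝ,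
      ∀ᵐ y : Euc N ∂(volume : Measure (Euc N)), R ≤ ‖y‖ → |u y| ≤ δ)
    (hpot : ∃ M : ℝ, ∀ x : Euc N,
      ∫⁻ y, ENNReal.ofReal (rieszKernel N α (x - y) * |u y| ^ (s - ε))
        ≤ ENNReal.ofReal M) :
    Tendsto (fun x : Euc N => rieszPot N α (fun y => |u y| ^ s) x)
      (cocompact (Euc N)) (𝓝 0) :=
  riesz_potential_decay_general N α s ε hα0 hαN hε0 hεs u hint.locallyIntegrable hdecay
    (hpot.imp fun _ h ↦ .of_forall h)

end
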